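/- The restriction of the symplectic form e to W × W is nondegenerate; that is, W is a nonzero symplectic subspace of (V, e). -/

import Mathlib

/-- `T` is the symplectic transvection `T_u[c]` with respect to the bilinear form `e`,
i.e. `T v = v + c·e(v,u)·u` for all `v`, with direction vector `u ≠ 0` and parameter `c ≠ 0`. -/
def IsTransvectionWith {k V : Type*} [Field k] [AddCommGroup V] [Module k V]
    (e : V →ₗ[k] V →ₗ[k] k) (T : V ≃ₗ[k] V) (u : V) (c : k) : Prop :=
  u ≠ 0 ∧ c ≠ 0 ∧ ∀ v : V, T v = v + (c * e v u) • u

/-- `T` is a symplectic transvection with respect to the bilinear form `e`. -/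
def IsTransvection {k V : Type*} [Field k] [AddCommGroup V] [Module k V]
    (e : V →ₗ[k] V →ₗ[k] k) (T : V ≃ₗ[k] V) : Prop :=
  ∃ u c, IsTransvectionWith e T u c

/-!
The radical of `e` on `W` is `R`-stable, so by simplicity it is `0` or `W`. In the second case `W`
is totally isotropic. A transvection `T_u[c]` in `R` moves `w ∈ W` by a multiple of `u`, so either
`e w u = 0` or `u ∈ W`, and isotropy gives `e w u = 0` in both cases. Since similitudes conjugate
transvections to transvections, the directions `u` span an `M`-stable subspace, which is all of
`V`; hence `e w` vanishes on `V` and `w = 0`.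
-/

section

variable {k V : Type*} [Field k] [AddCommGroup V] [Module k V]

/-- `U` is a `k[G]`-submodule of `V`, for a group `G` of linear automorphisms of `V`. -/
def IsStable (G : Subgroup (V ≃ₗ[k] V)) (U : Submodule k V) : Prop :=
  ∀ g ∈ G, ∀ u ∈ U, g u ∈ U

/-- `g` is a similitude of `e` with multiplier `μ`. -/
def IsSimilitudeWith (e : V →ₗ[k] V →ₗ[k] k) (g : V ≃ₗ[k] V) (μ : k) : Prop :=
  μ ≠ 0 ∧ ∀ x y : V, e (g x) (g y) = μ * e x y

/-- `g` is a similitude of `e`; for symplectic `e` these are the elements of `GSp(V, e)`. -/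
def IsSimilitude (e : V →ₗ[k] V →ₗ[k] k) (g : V ≃ₗ[k] V) : Prop :=
  ∃ μ, IsSimilitudeWith e g μ

/-- The subgroup of `M` generated by the transvections it contains, denoted `R` in the theorem. -/
def transvectionSubgroup (e : V →ₗ[k] V →ₗ[k] k) (M : Subgroup (V ≃ₗ[k] V)) :
    Subgroup (V ≃ₗ[k] V) :=
  Subgroup.closure {T | T ∈ M ∧ IsTransvection e T}

/-- The vectors `u` for which `M` contains some transvection `T_u[c]`. -/
def transvectionDirections (e : V →ₗ[k] V →ₗ[k] k) (M : Subgroup (V ≃ₗ[k] V)) : Set V :=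
  {u | ∃ T ∈ M, ∃ c, IsTransvectionWith e T u c}

variable {e : V →ₗ[k] V →ₗ[k] k} {G M : Subgroup (V ≃ₗ[k] V)} {U W : Submodule k V}
  {g T : V ≃ₗ[k] V} {u w : V} {c μ : k}

theorem IsStable.inf (hU : IsStable G U) (hW : IsStable G W) : IsStable G (U ⊓ W) :=
  fun g hg v hv => ⟨hU g hg v hv.1, hW g hg v hv.2⟩

-- `orthogonalBilin` is the right orthogonal; flipping `e` makes it the left one.
theorem mem_orthogonalBilin_flip : w ∈ W.orthogonalBilin e.flip ↔ ∀ w' ∈ W, e w w' = 0 :=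
  Submodule.mem_orthogonalBilin_iff

theorem IsStable.orthogonalBilin_flip (hG : ∀ g ∈ G, IsSimilitude e g) (hW : IsStable G W) :
    IsStable G (W.orthogonalBilin e.flip) := by
  intro g hg v hv
  rw [mem_orthogonalBilin_flip] at hv ⊢
  intro w hw
  obtain ⟨μ, -, he⟩ := hG g hg
  have hgw : g (g⁻¹ w) = w := g.apply_symm_apply w
  calc e (g v) w = e (g v) (g (g⁻¹ w)) := by rw [hgw]
    _ = μ * e v (g⁻¹ w) := he _ _
    _ = 0 := by rw [hv _ (hW _ (G.inv_mem hg) w hw), mul_zero]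

theorem IsTransvectionWith.conj (hT : IsTransvectionWith e T u c) (hg : IsSimilitudeWith e g μ) :
    IsTransvectionWith e (g * T * g⁻¹) (g u) (c / μ) := by
  obtain ⟨hu, hc, hTv⟩ := hT
  obtain ⟨hμ, he⟩ := hg
  refine ⟨g.map_ne_zero_iff.2 hu, div_ne_zero hc hμ, fun v => ?_⟩
  have hgv : g (g⁻¹ v) = v := g.apply_symm_apply v
  have he_inv : e v (g u) = μ * e (g⁻¹ v) u := by rw [← he, hgv]
  calc (g * T * g⁻¹) v = g (g⁻¹ v + (c * e (g⁻¹ v) u) • u) := congrArg g (hTv _)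
    _ = v + (c * e (g⁻¹ v) u) • g u := by rw [map_add, map_smul, hgv]
    _ = v + (c / μ * e v (g u)) • g u := by
      rw [he_inv, ← mul_assoc, div_mul_cancel₀ c hμ]

theorem IsTransvectionWith.apply_eq_zero_or_mem (hT : IsTransvectionWith e T u c)
    (hw : w ∈ W) (hTw : T w ∈ W) : e w u = 0 ∨ u ∈ W := by
  refine or_iff_not_imp_left.2 fun hwu => ?_
  have hsub : (c * e w u) • u ∈ W := by
    simpa only [hT.2.2 w, add_sub_cancel_left] using W.sub_mem hTw hw
  exact (W.smul_mem_iff (mul_ne_zero hT.2.1 hwu)).1 hsub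

theorem transvectionSubgroup_le : transvectionSubgroup e M ≤ M :=
  (Subgroup.closure_le M).2 fun _ hT => hT.1

theorem mem_transvectionSubgroup (hTM : T ∈ M) (hT : IsTransvection e T) :
    T ∈ transvectionSubgroup e M :=
  Subgroup.subset_closure ⟨hTM, hT⟩

theorem isStable_span_transvectionDirections (hM : ∀ g ∈ M, IsSimilitude e g) :
    IsStable M (Submodule.span k (transvectionDirections e M)) := by
  intro g hg
  suffices hmap : Submodule.span k (transvectionDirections e M) ≤
      (Submodule.span k (transvectionDirections e M)).comap g.toLinearMap from hmap
  rw [Submodule.span_le]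
  rintro u ⟨T, hTM, c, hT⟩
  obtain ⟨μ, hμ⟩ := hM g hg
  exact Submodule.subset_span
    ⟨g * T * g⁻¹, M.mul_mem (M.mul_mem hg hTM) (M.inv_mem hg), c / μ, hT.conj hμ⟩

theorem span_transvectionDirections_eq_top (hM : ∀ g ∈ M, IsSimilitude e g)
    (hTM : ∃ T ∈ M, IsTransvection e T)
    (hVsimple : ∀ U : Submodule k V, IsStable M U → U = ⊥ ∨ U = ⊤) :
    Submodule.span k (transvectionDirections e M) = ⊤ := by
  refine (hVsimple _ (isStable_span_transvectionDirections hM)).resolve_left fun hbot => ?_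
  obtain ⟨T, hTM, u, c, hT⟩ := hTM
  exact hT.1 (Submodule.span_eq_bot.1 hbot u ⟨T, hTM, c, hT⟩)

theorem IsStable.apply_transvectionDirection_eq_zero (hW : IsStable (transvectionSubgroup e M) W)
    (hisotropic : W ≤ W.orthogonalBilin e.flip) (hw : w ∈ W)
    (hu : u ∈ transvectionDirections e M) : e w u = 0 := by
  obtain ⟨T, hTM, c, hT⟩ := hu
  have hTw : T w ∈ W := hW T (mem_transvectionSubgroup hTM ⟨u, c, hT⟩) w hw
  exact (hT.apply_eq_zero_or_mem hw hTw).elim id (mem_orthogonalBilin_flip.1 (hisotropic hw) u)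

theorem IsStable.eq_bot_of_le_orthogonalBilin_flip (he : e.SeparatingLeft)
    (hspan : Submodule.span k (transvectionDirections e M) = ⊤)
    (hW : IsStable (transvectionSubgroup e M) W)
    (hisotropic : W ≤ W.orthogonalBilin e.flip) : W = ⊥ := by
  refine (Submodule.eq_bot_iff W).2 fun w hw => he w fun v => ?_
  have hker : e w = 0 := LinearMap.ext_on hspan fun u hu =>
    hW.apply_transvectionDirection_eq_zero hisotropic hw hu
  rw [hker, LinearMap.zero_apply]

theorem restriction_to_W_nondegenerate_general (he : e.SeparatingLeft)
    (hM : ∀ g ∈ M, IsSimilitude e g) (hTM : ∃ T ∈ M, IsTransvection e T)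
    (hVsimple : ∀ U : Submodule k V, IsStable M U → U = ⊥ ∨ U = ⊤)
    (hWstable : IsStable (transvectionSubgroup e M) W)
    (hWsimple : ∀ U ≤ W, IsStable (transvectionSubgroup e M) U → U = ⊥ ∨ U = W) :
    ∀ w ∈ W, (∀ w' ∈ W, e w w' = 0) → w = 0 := by
  suffices hradical : W ⊓ W.orthogonalBilin e.flip = ⊥ from fun w hw hwW =>
    (Submodule.eq_bot_iff _).1 hradical w ⟨hw, mem_orthogonalBilin_flip.2 hwW⟩
  have hstable : IsStable (transvectionSubgroup e M) (W ⊓ W.orthogonalBilin e.flip) :=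
    hWstable.inf (hWstable.orthogonalBilin_flip fun g hg => hM g (transvectionSubgroup_le hg))
  rcases hWsimple _ inf_le_left hstable with hbot | hisotropic
  · exact hbot
  · have hspan := span_transvectionDirections_eq_top hM hTM hVsimple
    rw [hisotropic]
    exact hWstable.eq_bot_of_le_orthogonalBilin_flip he hspan (inf_eq_left.1 hisotropic)

end

/-- the restriction of the symplectic form `e` to `W × W` is nondegenerate,
i.e. `W` is a nonzero symplectic subspace of `(V, e)`. -/
theorem restriction_to_W_nondegenerate
    {ℓ : ℕ} [Fact (Nat.Prime ℓ)] (hℓ : 2 < ℓ)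
    {V : Type*} [AddCommGroup V] [Module (ZMod ℓ) V] [FiniteDimensional (ZMod ℓ) V]
    (e : V →ₗ[ZMod ℓ] V →ₗ[ZMod ℓ] ZMod ℓ)
    (halt : ∀ v : V, e v v = 0)
    (hnondeg : ∀ v : V, (∀ w : V, e v w = 0) → v = 0)
    -- `M` is a subgroup of `GSp(V, e)` :
    (M : Subgroup (V ≃ₗ[ZMod ℓ] V))
    (hM : ∀ g ∈ M, ∃ μ : ZMod ℓ, μ ≠ 0 ∧ ∀ x y : V, e (g x) (g y) = μ * e x y)
    -- `M` contains a symplectic transvection :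
    (hTM : ∃ T ∈ M, IsTransvection e T)
    -- `V` is a simple `F_ℓ[M]`-module :
    (hVsimple : ∀ U : Submodule (ZMod ℓ) V, (∀ g ∈ M, ∀ u ∈ U, g u ∈ U) → U = ⊥ ∨ U = ⊤)
    -- `R` is the subgroup of `M` generated by the transvections contained in `M` :
    (R : Subgroup (V ≃ₗ[ZMod ℓ] V))
    (hR : R = Subgroup.closure {T : V ≃ₗ[ZMod ℓ] V | T ∈ M ∧ IsTransvection e T})
    -- `W` is a nonzero `R`-invariant subspace which is a simple `F_ℓ[R]`-module :
    (W : Submodule (ZMod ℓ) V) (hW0 : W ≠ ⊥)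
    (hWinv : ∀ r ∈ R, ∀ w ∈ W, r w ∈ W)
    (hWsimple : ∀ U : Submodule (ZMod ℓ) V, U ≤ W → (∀ r ∈ R, ∀ u ∈ U, r u ∈ U) →
      U = ⊥ ∨ U = W) :
    W ≠ ⊥ ∧ ∀ w ∈ W, (∀ w' ∈ W, e w w' = 0) → w = 0 := by
  subst hR
  exact ⟨hW0, restriction_to_W_nondegenerate_general hnondeg hM hTM hVsimple hWinv hWsimple⟩
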